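/- Let (S, α) be an instance of Min-kCSG, and let γ_1, …, γ_m be a partition of the primary colors {1,…,k} into m nonempty groups, each of size at most 2. For each j ∈ {1,…,m}, let G_j be a minimum CSG for the restricted instance (S_{γ_j}, α_{γ_j}). Then the union G_1 ∪ ⋯ ∪ G_m (on vertex set S, with the union of all edge sets) is a colored spanning graph for (S, α) whose total edge weight is at most m · OPT(S, α). In particular, taking m = ⌈k/2⌉ groups yields a CSG of weight at most ⌈k/2⌉ · OPT(S, α). -/

import Mathlib

/-! Every color `c` lies in some group `γ j`, and for `c ∈ γ j` the points of color `c` are the same in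
the instance restricted to `γ j` as in the full one (`Sc_restrict`). So the `c`-connectivity of `E j`
carries over to the union, which is therefore a CSG. Conversely, deleting from a CSG of the full
instance all edges with an endpoint outside `Sγ S α γ` leaves a CSG of the restricted instance
(`IsCSG.restrict`). Hence each `E j`, being minimum, weighs at most as much as the optimum, and the
weight of the union is at most the sum of the `m` weights. -/

open scoped BigOperators

namespace MCSG

noncomputable section

/-- Points in the plane. -/
abbrev Pt : Type := EuclideanSpace ℝ (Fin 2)

noncomputable instance : DecidableEq Pt := Classical.decEq _

/-- Euclidean length of an edge (unordered pair of points). -/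
def edgeWeight : Sym2 Pt → ℝ :=
  Sym2.lift ⟨fun p q => dist p q, fun p q => dist_comm p q⟩

/-- Total weight of an edge set. -/
def totalWeight (E : Finset (Sym2 Pt)) : ℝ := ∑ e ∈ E, edgeWeight e

/-- The color of an edge: the common primary colors of its endpoints. -/
def edgeColor {k : ℕ} (α : Pt → Finset (Fin k)) : Sym2 Pt → Finset (Fin k) :=
  Sym2.lift ⟨fun p q => α p ∩ α q, fun p q => Finset.inter_comm _ _⟩

/-- `E` is a set of edges on the vertex set `S` (no loops). -/
def EdgesOn (S : Finset Pt) (E : Finset (Sym2 Pt)) : Prop :=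
  ∀ e ∈ E, ¬ e.IsDiag ∧ ∀ p ∈ e, p ∈ S

/-- One step in the subgraph of the edge set `E` induced by the vertex set `V`. -/
def AdjIn (V : Set Pt) (E : Finset (Sym2 Pt)) (p q : Pt) : Prop :=
  p ∈ V ∧ q ∈ V ∧ p ≠ q ∧ s(p, q) ∈ E

/-- Reachability in the subgraph of `E` induced by `V`. -/
def ReachIn (V : Set Pt) (E : Finset (Sym2 Pt)) : Pt → Pt → Prop :=
  Relation.ReflTransGen (AdjIn V E)

/-- The subgraph of `E` induced by `V` is connected. -/
def ConnOn (V : Finset Pt) (E : Finset (Sym2 Pt)) : Prop :=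
  ∀ p ∈ V, ∀ q ∈ V, ReachIn (↑V) E p q

/-- The set `S_c` of points of `S` having primary color `c`. -/
def Sc {k : ℕ} (S : Finset Pt) (α : Pt → Finset (Fin k)) (c : Fin k) : Finset Pt :=
  S.filter fun p => c ∈ α p

/-- `(S, E)` is a colored spanning graph for the instance `(S, α)`. -/
def IsCSG {k : ℕ} (S : Finset Pt) (α : Pt → Finset (Fin k)) (E : Finset (Sym2 Pt)) : Prop :=
  EdgesOn S E ∧ ∀ c : Fin k, ConnOn (Sc S α c) E

/-- `(S, E)` is a minimum colored spanning graph for `(S, α)`. -/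
def IsMinCSG {k : ℕ} (S : Finset Pt) (α : Pt → Finset (Fin k)) (E : Finset (Sym2 Pt)) : Prop :=
  IsCSG S α E ∧ ∀ E' : Finset (Sym2 Pt), IsCSG S α E' → totalWeight E ≤ totalWeight E'

/-- `T` is a spanning tree of (the complete graph on) the point set `P`. -/
def IsSpanningTreeOn (P : Finset Pt) (T : Finset (Sym2 Pt)) : Prop :=
  EdgesOn P T ∧ ConnOn P T ∧ T.card + 1 = P.card

/-- `T` is a minimum spanning tree of the point set `P`. -/
def IsMST (P : Finset Pt) (T : Finset (Sym2 Pt)) : Prop :=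
  IsSpanningTreeOn P T ∧ ∀ T', IsSpanningTreeOn P T' → totalWeight T ≤ totalWeight T'

/-- Restricted coloring `α_γ`. -/
def restrictColor {k : ℕ} (γ : Finset (Fin k)) (α : Pt → Finset (Fin k)) : Pt → Finset (Fin k) :=
  fun p => α p ∩ γ

/-- Restricted point set `S_γ`. -/
def Sγ {k : ℕ} (S : Finset Pt) (α : Pt → Finset (Fin k)) (γ : Finset (Fin k)) : Finset Pt :=
  S.filter fun p => (α p ∩ γ).Nonempty

/-- `ρ` is a Steiner ratio bound. -/
def SteinerRatioBound (ρ : ℝ) : Prop :=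
  ∀ P Q : Finset Pt, P.Nonempty → P ⊆ Q →
    ∀ T : Finset (Sym2 Pt), EdgesOn Q T → ConnOn Q T →
      ∀ M : Finset (Sym2 Pt), IsMST P M → totalWeight M ≤ ρ * totalWeight T

end


theorem edgeWeight_nonneg (e : Sym2 Pt) : 0 ≤ edgeWeight e := by
  induction e using Sym2.ind with
  | _ p q => exact dist_nonneg (x := p) (y := q)

theorem Sc_restrict {k : ℕ} (S : Finset Pt) (α : Pt → Finset (Fin k)) {γ : Finset (Fin k)}
    {c : Fin k} (hc : c ∈ γ) : Sc (Sγ S α γ) (restrictColor γ α) c = Sc S α c := by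
  ext p
  simp only [Sc, Sγ, restrictColor, Finset.mem_filter, Finset.mem_inter]
  constructor
  · rintro ⟨⟨hp, -⟩, hcp, -⟩
    exact ⟨hp, hcp⟩
  · rintro ⟨hp, hcp⟩
    exact ⟨⟨hp, c, Finset.mem_inter.2 ⟨hcp, hc⟩⟩, hcp, hc⟩

/-- Connectivity of the induced subgraph on `V` depends only on the edges with both endpoints
in `V`. -/
theorem ConnOn.of_edges {V : Finset Pt} {E F : Finset (Sym2 Pt)} (h : ConnOn V E)
    (hEF : ∀ e ∈ E, (∀ p ∈ e, p ∈ V) → e ∈ F) : ConnOn V F := by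
  intro p hp q hq
  refine Relation.ReflTransGen.mono ?_ _ _ (h p hp q hq)
  rintro a b ⟨ha, hb, hab, he⟩
  refine ⟨ha, hb, hab, hEF _ he fun x hx => ?_⟩
  rcases Sym2.mem_iff.1 hx with rfl | rfl
  · exact ha
  · exact hb

open Classical in
/-- The edges of a CSG with both endpoints in `Sγ S α γ` form a CSG of the restricted instance. -/
theorem IsCSG.restrict {k : ℕ} {S : Finset Pt} {α : Pt → Finset (Fin k)} {E : Finset (Sym2 Pt)}
    (h : IsCSG S α E) (γ : Finset (Fin k)) :
    IsCSG (Sγ S α γ) (restrictColor γ α) (E.filter fun e => ∀ p ∈ e, p ∈ Sγ S α γ) := by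
  refine ⟨fun e he => ?_, fun c => ?_⟩
  · rw [Finset.mem_filter] at he
    exact ⟨(h.1 e he.1).1, he.2⟩
  · by_cases hc : c ∈ γ
    · have hsub : Sc S α c ⊆ Sγ S α γ := by
        rw [← Sc_restrict S α hc]
        exact Finset.filter_subset _ _
      rw [Sc_restrict S α hc]
      exact (h.2 c).of_edges fun e he hV => Finset.mem_filter.2 ⟨he, fun p hp => hsub (hV p hp)⟩
    · -- No point has color `c` after restriction.
      intro p hp
      exact absurd (Finset.mem_inter.1 (Finset.mem_filter.1 hp).2).2 hc

theorem totalWeight_mono {E F : Finset (Sym2 Pt)} (h : E ⊆ F) : totalWeight E ≤ totalWeight F :=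
  Finset.sum_le_sum_of_subset_of_nonneg h fun e _ _ => edgeWeight_nonneg e

theorem totalWeight_biUnion_le {m : ℕ} (E : Fin m → Finset (Sym2 Pt)) :
    totalWeight (Finset.univ.biUnion E) ≤ ∑ j, totalWeight (E j) := by
  have key : ∀ s : Finset (Fin m), totalWeight (s.biUnion E) ≤ ∑ j ∈ s, totalWeight (E j) := by
    intro s
    induction s using Finset.induction_on with
    | empty => simp [totalWeight]
    | insert a s ha ih =>
      rw [Finset.biUnion_insert, Finset.sum_insert ha]
      have h1 : totalWeight (E a ∪ s.biUnion E) + totalWeight (E a ∩ s.biUnion E)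
          = totalWeight (E a) + totalWeight (s.biUnion E) := Finset.sum_union_inter
      have h2 : 0 ≤ totalWeight (E a ∩ s.biUnion E) :=
        Finset.sum_nonneg fun e _ => edgeWeight_nonneg e
      linarith
  exact key _

/-- partitioning the `k` primary colors into `m` nonempty groups of size at most 2
and taking the union of minimum CSGs of the restricted instances yields a CSG of weight
at most `m · OPT`. -/
theorem groupwise_approx {k m : ℕ} (S : Finset Pt) (α : Pt → Finset (Fin k))
    (hα : ∀ p ∈ S, (α p).Nonempty)
    (γ : Fin m → Finset (Fin k))
    (hne : ∀ j, (γ j).Nonempty) (hcard : ∀ j, (γ j).card ≤ 2)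
    (hdisj : ∀ j₁ j₂, j₁ ≠ j₂ → Disjoint (γ j₁) (γ j₂))
    (hcover : ∀ c : Fin k, ∃ j, c ∈ γ j)
    (E : Fin m → Finset (Sym2 Pt))
    (hE : ∀ j, IsMinCSG (Sγ S α (γ j)) (restrictColor (γ j) α) (E j))
    (Eopt : Finset (Sym2 Pt)) (hopt : IsMinCSG S α Eopt) :
    IsCSG S α (Finset.univ.biUnion E) ∧
      totalWeight (Finset.univ.biUnion E) ≤ (m : ℝ) * totalWeight Eopt := by
  constructor
  · refine ⟨fun e he => ?_, fun c => ?_⟩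
    · obtain ⟨j, -, hj⟩ := Finset.mem_biUnion.1 he
      have h := (hE j).1.1 e hj
      exact ⟨h.1, fun p hp => (Finset.mem_filter.1 (h.2 p hp)).1⟩
    · obtain ⟨j, hj⟩ := hcover c
      have h := (hE j).1.2 c
      rw [Sc_restrict S α hj] at h
      exact h.of_edges fun e he _ => Finset.mem_biUnion.2 ⟨j, Finset.mem_univ j, he⟩
  · classical
    calc totalWeight (Finset.univ.biUnion E) ≤ ∑ j, totalWeight (E j) := totalWeight_biUnion_le E
      _ ≤ ∑ _j : Fin m, totalWeight Eopt := Finset.sum_le_sum fun j _ =>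
          ((hE j).2 _ (hopt.1.restrict (γ j))).trans (totalWeight_mono (Finset.filter_subset _ _))
      _ = (m : ℝ) * totalWeight Eopt := by simp

end MCSG
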